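/- Let d ∈ ℕ, p ∈ ℕ₀, C > 0, h ∈ [1, ∞], and let a : K → ℝ be (p+1, C)-smooth w.r.t. the norm |·|_h on a convex set K ⊆ ℝ^d. For z in the interior of K, let a_p(·; z) denote the Taylor polynomial of a of degree p around z, i.e. a_p(x; z) = Σ_{n=0}^p (1/n!) Σ_{l_1+…+l_d = n} (n choose l_1,…,l_d) (∂^n a(z)/∂x_1^{l_1}⋯∂x_d^{l_d}) Π_{i=1}^d (x_i − z_i)^{l_i}. Then for all x ∈ K, |a(x) − a_p(x; z)| ≤ ( C / (p+1)! ) · |x − z|_h^{p+1} · d^{p(1 − 1/h)}. -/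

import Mathlib

open scoped ENNReal

/-- The `|·|_h` norm on `ℝ^d`, `h ∈ [1,∞]`: `|x|_h = (Σ|x_i|^h)^{1/h}`, `|x|_∞ = max |x_i|`. -/
noncomputable def pnorm (d : ℕ) (h : ℝ≥0∞) (x : Fin d → ℝ) : ℝ :=
  if h = ∞ then ⨆ i, |x i| else (∑ i, |x i| ^ h.toReal) ^ (1 / h.toReal)

/-- The partial derivative in the `i`-th coordinate. -/
noncomputable def partialDerivCoord (d : ℕ) (i : Fin d) (g : (Fin d → ℝ) → ℝ) :
    (Fin d → ℝ) → ℝ :=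
  fun x => deriv (fun t => g (Function.update x i t)) (x i)

/-- The multi-index partial derivative `∂_α = Π_i (∂/∂x_i)^{α_i}`. -/
noncomputable def partialDerivMulti (d : ℕ) (α : Fin d → ℕ) (g : (Fin d → ℝ) → ℝ) :
    (Fin d → ℝ) → ℝ :=
  (List.finRange d).foldr (fun i g' => (partialDerivCoord d i)^[α i] g') g

/-!
Along the segment `t ↦ z + t • v` with `v = x - z`, the degree-`n` homogeneous part of the Taylor
expansion, `cₙ(t) = ∑_{|l| = n} vˡ / l! · ∂_l a (z + t • v)`, satisfies `cₙ' = (n + 1) cₙ₊₁`. By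
the multinomial theorem, the hypothesis on the derivatives of order `p` bounds `c_p(t) - c_p(0)` by
`t · C |v|_h |v|₁ᵖ / p!`. Integrating this estimate `p` times gives the remainder bound with
`|v|_h |v|₁ᵖ` in place of `|v|_h ^ (p + 1)`, and Hölder's inequality
`|v|₁ ≤ d ^ (1 - 1 / h) |v|_h` concludes.
-/

open Finset

section PartialDerivatives

variable {d : ℕ} {g : (Fin d → ℝ) → ℝ} {m : WithTop ℕ∞}

lemma partialDerivCoord_eq_fderiv_apply_single {x : Fin d → ℝ} (i : Fin d)
    (hg : DifferentiableAt ℝ g x) :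
    partialDerivCoord d i g x = fderiv ℝ g x (Pi.single i 1) := by
  have hg' : HasFDerivAt g (fderiv ℝ g x) (Function.update x i (x i)) := by
    simpa using hg.hasFDerivAt
  exact (hg'.comp_hasDerivAt (x i) (hasDerivAt_update x i (x i))).deriv

lemma partialDerivCoord_eq_fderiv (i : Fin d) (hg : Differentiable ℝ g) :
    partialDerivCoord d i g = fun x => fderiv ℝ g x (Pi.single i 1) :=
  funext fun x => partialDerivCoord_eq_fderiv_apply_single i (hg x)

lemma contDiff_partialDerivCoord (i : Fin d) (hg : ContDiff ℝ (m + 1) g) :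
    ContDiff ℝ m (partialDerivCoord d i g) := by
  rw [partialDerivCoord_eq_fderiv i (hg.differentiable (by simp))]
  exact (hg.fderiv_right le_rfl).clm_apply contDiff_const

lemma partialDerivCoord_comm (i j : Fin d) (hg : ContDiff ℝ 2 g) :
    partialDerivCoord d i (partialDerivCoord d j g) =
      partialDerivCoord d j (partialDerivCoord d i g) := by
  have hdiff : Differentiable ℝ g := hg.differentiable (by simp)
  have hdiff' : Differentiable ℝ (fderiv ℝ g) :=
    (hg.fderiv_right (m := 1) (by norm_num)).differentiable (by simp)
  have partialDerivCoord_twice (k l : Fin d) (x : Fin d → ℝ) :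
      partialDerivCoord d k (partialDerivCoord d l g) x =
        fderiv ℝ (fderiv ℝ g) x (Pi.single k 1) (Pi.single l 1) := by
    rw [partialDerivCoord_eq_fderiv l hdiff,
      partialDerivCoord_eq_fderiv_apply_single k
        ((hdiff' x).clm_apply (differentiableAt_const _)),
      fderiv_clm_apply (hdiff' x) (differentiableAt_const _)]
    simp
  funext x
  rw [partialDerivCoord_twice, partialDerivCoord_twice]
  exact hg.contDiffAt.isSymmSndFDerivAt (by simp) _ _

lemma contDiff_iterate_partialDerivCoord (i : Fin d) (k : ℕ) (hg : ContDiff ℝ (m + k) g) :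
    ContDiff ℝ m ((partialDerivCoord d i)^[k] g) := by
  induction k generalizing g with
  | zero => simpa using hg
  | succ k ih =>
    rw [Function.iterate_succ_apply]
    exact ih (contDiff_partialDerivCoord i (by simpa [add_assoc] using hg))

lemma partialDerivCoord_iterate_comm (i j : Fin d) (k : ℕ) (hg : ContDiff ℝ (k + 1) g) :
    partialDerivCoord d i ((partialDerivCoord d j)^[k] g) =
      (partialDerivCoord d j)^[k] (partialDerivCoord d i g) := by
  induction k generalizing g with
  | zero => rfl
  | succ k ih =>
    have hcomm := partialDerivCoord_comm i j
      (hg.of_le (by exact_mod_cast (by omega : 2 ≤ k + 1 + 1)))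
    rw [Function.iterate_succ_apply, Function.iterate_succ_apply, ← hcomm]
    exact ih (contDiff_partialDerivCoord j (by simpa using hg))

/-- The iterated partial derivative `∏_{i ∈ L} (∂/∂xᵢ)^{αᵢ}`, with the coordinates restricted to a
list `L`, so that `partialDerivMulti d α` (the case of all coordinates) is open to induction. -/
noncomputable def partialDerivList (L : List (Fin d)) (α : Fin d → ℕ) (g : (Fin d → ℝ) → ℝ) :
    (Fin d → ℝ) → ℝ :=
  L.foldr (fun i g' => (partialDerivCoord d i)^[α i] g') g

lemma partialDerivList_cons (j : Fin d) (L : List (Fin d)) (α : Fin d → ℕ) :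
    partialDerivList (j :: L) α g = (partialDerivCoord d j)^[α j] (partialDerivList L α g) :=
  rfl

lemma contDiff_partialDerivList (L : List (Fin d)) (α : Fin d → ℕ)
    (hg : ContDiff ℝ (m + (L.map α).sum) g) : ContDiff ℝ m (partialDerivList L α g) := by
  induction L generalizing m with
  | nil => simpa [partialDerivList] using hg
  | cons j L ih =>
    exact contDiff_iterate_partialDerivCoord j (α j) (ih (by simpa [add_assoc] using hg))

lemma partialDerivList_congr {L : List (Fin d)} {α β : Fin d → ℕ} (h : ∀ i ∈ L, α i = β i) :
    partialDerivList L α g = partialDerivList L β g := by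
  induction L with
  | nil => rfl
  | cons j L ih =>
    rw [List.forall_mem_cons] at h
    rw [partialDerivList_cons, partialDerivList_cons, ih h.2, h.1]

lemma partialDerivCoord_partialDerivList {L : List (Fin d)} (α : Fin d → ℕ) {i : Fin d}
    (hL : L.Nodup) (hi : i ∈ L) (hg : ContDiff ℝ ((L.map α).sum + 1) g) :
    partialDerivCoord d i (partialDerivList L α g) =
      partialDerivList L (α + Pi.single i 1) g := by
  induction L with
  | nil => simp at hi
  | cons j L ih =>
    obtain ⟨hjL, hL⟩ := List.nodup_cons.1 hL
    rw [List.map_cons, List.sum_cons] at hg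
    rw [partialDerivList_cons, partialDerivList_cons]
    obtain rfl | hiL := List.mem_cons.1 hi
    · have hrest : partialDerivList L (α + Pi.single i 1) g = partialDerivList L α g :=
        partialDerivList_congr fun k hk => by simp [ne_of_mem_of_not_mem hk hjL]
      rw [hrest, ← Function.iterate_succ_apply' (partialDerivCoord d i)]
      simp
    · have hij : j ≠ i := (ne_of_mem_of_not_mem hiL hjL).symm
      have hcontDiff : ContDiff ℝ (α j + 1) (partialDerivList L α g) :=
        contDiff_partialDerivList L α (hg.of_le (by norm_cast; omega))
      rw [partialDerivCoord_iterate_comm i j _ hcontDiff,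
        ih hL hiL (hg.of_le (by norm_cast; omega))]
      simp [hij]

lemma contDiff_partialDerivMulti (α : Fin d → ℕ) (hg : ContDiff ℝ (m + (∑ i, α i : ℕ)) g) :
    ContDiff ℝ m (partialDerivMulti d α g) :=
  contDiff_partialDerivList _ α (by rwa [← List.ofFn_eq_map, List.sum_ofFn])

lemma partialDerivCoord_partialDerivMulti (α : Fin d → ℕ) (i : Fin d)
    (hg : ContDiff ℝ ((∑ i, α i : ℕ) + 1) g) :
    partialDerivCoord d i (partialDerivMulti d α g) = partialDerivMulti d (α + Pi.single i 1) g :=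
  partialDerivCoord_partialDerivList α (List.nodup_finRange d) (List.mem_finRange i)
    (by rwa [← List.ofFn_eq_map, List.sum_ofFn])

lemma partialDerivMulti_zero : partialDerivMulti d 0 g = g := by
  simp [partialDerivMulti]

lemma hasDerivAt_comp_add_smul {z v : Fin d → ℝ} {t : ℝ}
    (hg : DifferentiableAt ℝ g (z + t • v)) :
    HasDerivAt (fun s : ℝ => g (z + s • v))
      (∑ i, v i * partialDerivCoord d i g (z + t • v)) t := by
  have hline : HasDerivAt (fun s : ℝ => z + s • v) v t := by
    simpa using ((hasDerivAt_id t).smul_const v).const_add z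
  refine (hg.hasFDerivAt.comp_hasDerivAt t hline).congr_deriv ?_
  have map_eq_sum (L : (Fin d → ℝ) →L[ℝ] ℝ) : L v = ∑ i, v i * L (Pi.single i 1) := by
    conv_lhs => rw [pi_eq_sum_univ' v]
    simp only [map_sum, map_smul, smul_eq_mul]
  simp only [map_eq_sum, partialDerivCoord_eq_fderiv_apply_single _ hg]

end PartialDerivatives

section MultiIndices

variable {ι 𝕜 : Type*} [Fintype ι] [Field 𝕜]

/-- The monomial `vˡ / l! = ∏ᵢ vᵢ^{lᵢ} / lᵢ!` in multi-index notation, by which `∂_l a (z)` is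
multiplied in the Taylor expansion of `a` at `z`. -/
def taylorMonomial (v : ι → 𝕜) (l : ι → ℕ) : 𝕜 :=
  ∏ i, v i ^ l i / (Nat.factorial (l i) : 𝕜)

lemma abs_taylorMonomial [LinearOrder 𝕜] [IsStrictOrderedRing 𝕜] (v : ι → 𝕜) (l : ι → ℕ) :
    |taylorMonomial v l| = taylorMonomial (fun i => |v i|) l := by
  simp [taylorMonomial, abs_prod, abs_div]

variable [DecidableEq ι]

lemma mem_piAntidiag_univ {l : ι → ℕ} {n : ℕ} : l ∈ piAntidiag univ n ↔ ∑ i, l i = n := by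
  simp

lemma sum_filter_piFinset_range_eq_sum_piAntidiag {M : Type*} [AddCommMonoid M] (p : ℕ)
    (f : (ι → ℕ) → M) :
    ∑ l ∈ (Fintype.piFinset fun _ : ι => range (p + 1)).filter (fun l => ∑ i, l i ≤ p), f l =
      ∑ n ∈ range (p + 1), ∑ l ∈ piAntidiag univ n, f l := by
  rw [← sum_fiberwise_of_maps_to (g := fun l : ι → ℕ => ∑ i, l i) (t := range (p + 1))
    (fun l hl => by simp only [mem_filter, mem_range] at hl ⊢; omega)]
  refine sum_congr rfl fun n hn => sum_congr ?_ fun _ _ => rfl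
  ext l
  have hle (i : ι) : l i ≤ ∑ j, l j := single_le_sum (fun _ _ => Nat.zero_le _) (mem_univ i)
  simp only [mem_filter, Fintype.mem_piFinset, mem_range, mem_piAntidiag_univ] at hn ⊢
  exact ⟨And.right, fun hl => ⟨⟨fun i => by have := hle i; omega, by omega⟩, hl⟩⟩

lemma sum_piAntidiag_add_single {M : Type*} [AddCommMonoid M] (n : ℕ) (i : ι) {f : (ι → ℕ) → M}
    (hf : ∀ l, l i = 0 → f l = 0) :
    ∑ l ∈ piAntidiag univ n, f (l + Pi.single i 1) = ∑ l ∈ piAntidiag univ (n + 1), f l := by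
  have hsum (l : ι → ℕ) : ∑ j, (l + Pi.single i 1 : ι → ℕ) j = ∑ j, l j + 1 := by
    simp [sum_add_distrib]
  refine sum_bij_ne_zero (fun l _ _ => l + Pi.single i 1) ?_ ?_ ?_ fun _ _ _ => rfl
  · intro l hl _
    rw [mem_piAntidiag_univ] at hl ⊢
    rw [hsum, hl]
  · intro l _ _ l' _ _ h
    exact add_right_cancel h
  · intro l hl hne
    have hle : Pi.single i 1 ≤ l :=
      update_le_iff.2
        ⟨Nat.one_le_iff_ne_zero.2 fun h => hne (hf l h), fun j _ => Nat.zero_le (l j)⟩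
    have hsub : l - Pi.single i 1 + Pi.single i 1 = l := tsub_add_cancel_of_le hle
    refine ⟨l - Pi.single i 1, ?_, by rwa [hsub], hsub⟩
    rw [mem_piAntidiag_univ, ← hsub, hsum] at hl
    exact mem_piAntidiag_univ.2 (Nat.succ.inj hl)

lemma taylorMonomial_add_single [CharZero 𝕜] (v : ι → 𝕜) (l : ι → ℕ) (i : ι) :
    ((l i : 𝕜) + 1) * taylorMonomial v (l + Pi.single i 1) = v i * taylorMonomial v l := by
  have hrest : ∏ j ∈ univ.erase i, v j ^ (l + Pi.single i 1 : ι → ℕ) j /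
        (Nat.factorial ((l + Pi.single i 1 : ι → ℕ) j) : 𝕜) =
      ∏ j ∈ univ.erase i, v j ^ l j / (Nat.factorial (l j) : 𝕜) :=
    prod_congr rfl fun j hj => by simp [ne_of_mem_erase hj]
  have hfactorial : (Nat.factorial (l i) : 𝕜) ≠ 0 := by exact_mod_cast Nat.factorial_ne_zero _
  have hsucc : (l i : 𝕜) + 1 ≠ 0 := by exact_mod_cast (l i).succ_ne_zero
  rw [taylorMonomial, taylorMonomial, ← mul_prod_erase _ _ (mem_univ i), hrest,
    ← mul_prod_erase univ (fun j => v j ^ l j / (Nat.factorial (l j) : 𝕜)) (mem_univ i)]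
  simp only [Pi.add_apply, Pi.single_eq_same, Nat.factorial_succ, pow_succ]
  push_cast
  field_simp

lemma sum_taylorMonomial_mul_sum_add_single [CharZero 𝕜] (v : ι → 𝕜) (n : ℕ)
    (F : (ι → ℕ) → 𝕜) :
    ∑ l ∈ piAntidiag univ n, taylorMonomial v l * ∑ i, v i * F (l + Pi.single i 1) =
      (n + 1) * ∑ l ∈ piAntidiag univ (n + 1), taylorMonomial v l * F l := by
  calc ∑ l ∈ piAntidiag univ n, taylorMonomial v l * ∑ i, v i * F (l + Pi.single i 1)
      = ∑ i, ∑ l ∈ piAntidiag univ n, ((l + Pi.single i 1 : ι → ℕ) i : 𝕜) *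
          (taylorMonomial v (l + Pi.single i 1) * F (l + Pi.single i 1)) := by
        simp_rw [mul_sum]
        rw [sum_comm]
        refine sum_congr rfl fun i _ => sum_congr rfl fun l _ => ?_
        have := taylorMonomial_add_single v l i
        simp only [Pi.add_apply, Pi.single_eq_same, Nat.cast_add, Nat.cast_one]
        linear_combination -F (l + Pi.single i 1) * this
    _ = ∑ i, ∑ l ∈ piAntidiag univ (n + 1), (l i : 𝕜) * (taylorMonomial v l * F l) :=
        sum_congr rfl fun i _ => sum_piAntidiag_add_single n i
          (f := fun l => (l i : 𝕜) * (taylorMonomial v l * F l)) fun l hl => by simp [hl]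
    _ = (n + 1) * ∑ l ∈ piAntidiag univ (n + 1), taylorMonomial v l * F l := by
        rw [sum_comm, mul_sum]
        refine sum_congr rfl fun l hl => ?_
        rw [← sum_mul, ← Nat.cast_sum, mem_piAntidiag_univ.1 hl, Nat.cast_succ]

lemma sum_taylorMonomial [CharZero 𝕜] (v : ι → 𝕜) (n : ℕ) :
    ∑ l ∈ piAntidiag univ n, taylorMonomial v l = (∑ i, v i) ^ n / (Nat.factorial n : 𝕜) := by
  rw [sum_pow_eq_sum_piAntidiag, sum_div]
  refine sum_congr rfl fun l hl => ?_
  have hspec := Nat.multinomial_spec univ l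
  rw [mem_piAntidiag_univ.1 hl] at hspec
  have hprod : ∏ i, (Nat.factorial (l i) : 𝕜) ≠ 0 :=
    prod_ne_zero_iff.2 fun i _ => by exact_mod_cast Nat.factorial_ne_zero _
  have hmultinomial : (Nat.multinomial univ l : 𝕜) ≠ 0 := by
    exact_mod_cast (Nat.multinomial_pos univ l).ne'
  rw [taylorMonomial, prod_div_distrib, ← hspec]
  push_cast
  field_simp

end MultiIndices

section OneVariable

variable {E : Type*} [NormedAddCommGroup E] [NormedSpace ℝ E]

lemma hasDerivAt_sum_range_pow_smul (e : ℕ → E) (N : ℕ) (t : ℝ) :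
    HasDerivAt (fun t : ℝ => ∑ n ∈ range (N + 1), t ^ n • e n)
      (∑ n ∈ range N, t ^ n • ((n + 1 : ℝ) • e (n + 1))) t := by
  have hpow (n : ℕ) :
      HasDerivAt (fun t : ℝ => t ^ (n + 1) • e (n + 1)) (t ^ n • ((n + 1 : ℝ) • e (n + 1))) t := by
    refine ((hasDerivAt_pow (n + 1) t).smul_const (e (n + 1))).congr_deriv ?_
    simp [smul_smul, mul_comm]
  simp_rw [sum_range_succ' _ N, pow_zero]
  exact (HasDerivAt.fun_sum fun n _ => hpow n).add_const _

lemma norm_sub_sum_pow_smul_le {p : ℕ} {c : ℕ → ℝ → E} {M b : ℝ}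
    (hc : ∀ n < p, ∀ t ∈ Set.Icc 0 b,
      HasDerivWithinAt (c n) ((n + 1 : ℝ) • c (n + 1) t) (Set.Icc 0 b) t)
    (hM : ∀ t ∈ Set.Icc 0 b, ‖c p t - c p 0‖ ≤ M * t) :
    ∀ t ∈ Set.Icc 0 b,
      ‖c 0 t - ∑ n ∈ range (p + 1), t ^ n • c n 0‖ ≤ M * t ^ (p + 1) / (p + 1) := by
  induction p generalizing c M with
  | zero => simpa using hM
  | succ p ih =>
    have hderiv (t : ℝ) (ht : t ∈ Set.Icc 0 b) :
        HasDerivWithinAt (fun t => c 0 t - ∑ n ∈ range (p + 1 + 1), t ^ n • c n 0)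
          (c 1 t - ∑ n ∈ range (p + 1), t ^ n • ((n + 1 : ℝ) • c (n + 1) 0)) (Set.Icc 0 b) t := by
      have hc₀ : HasDerivWithinAt (c 0) (c 1 t) (Set.Icc 0 b) t := by
        simpa using hc 0 p.succ_pos t ht
      exact hc₀.fun_sub
        (hasDerivAt_sum_range_pow_smul (fun n => c n 0) (p + 1) t).hasDerivWithinAt
    have hderiv_le (t : ℝ) (ht : t ∈ Set.Icc 0 b) :
        ‖c 1 t - ∑ n ∈ range (p + 1), t ^ n • ((n + 1 : ℝ) • c (n + 1) 0)‖ ≤ M * t ^ (p + 1) := by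
      have hbound := ih (c := fun n t => (n + 1 : ℝ) • c (n + 1) t) (M := (p + 1) * M)
        (fun n hn t ht => by
          simpa using (hc (n + 1) (by omega) t ht).fun_const_smul (n + 1 : ℝ))
        (fun t ht => by
          rw [← smul_sub, norm_smul, Real.norm_of_nonneg (by positivity), mul_assoc]
          exact mul_le_mul_of_nonneg_left (hM t ht) (by positivity))
        t ht
      convert hbound using 1
      · simp
      · field_simp
    have hprimitive (t : ℝ) : HasDerivAt
        (fun t : ℝ => M * t ^ (p + 1 + 1) / ((p + 1 : ℕ) + 1)) (M * t ^ (p + 1)) t := by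
      refine (((hasDerivAt_pow (p + 1 + 1) t).const_mul M).div_const _).congr_deriv ?_
      have : ((p + 1 : ℕ) : ℝ) + 1 ≠ 0 := by positivity
      push_cast at this ⊢
      field_simp
    exact image_norm_le_of_norm_deriv_right_le_deriv_boundary
      (fun t ht => (hderiv t ht).continuousWithinAt)
      (fun t ht => (hderiv t ⟨ht.1, ht.2.le⟩).mono_of_mem_nhdsWithin
        (Icc_mem_nhdsGE_of_mem ht))
      (by simp [sum_range_succ']) hprimitive
      (fun t ht => hderiv_le t ⟨ht.1, ht.2.le⟩)

end OneVariable

section TaylorExpansion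

variable {d : ℕ} {a : (Fin d → ℝ) → ℝ}

/-- The degree-`n` part `∑_{|l| = n} vˡ / l! · ∂_l a (y)` of the Taylor expansion of `a` at `y`,
evaluated at the displacement `v`. -/
noncomputable def taylorTerm (a : (Fin d → ℝ) → ℝ) (v : Fin d → ℝ) (n : ℕ) (y : Fin d → ℝ) : ℝ :=
  ∑ l ∈ piAntidiag univ n, taylorMonomial v l * partialDerivMulti d l a y

lemma taylorTerm_zero (v y : Fin d → ℝ) : taylorTerm a v 0 y = a y := by
  simp [taylorTerm, taylorMonomial, partialDerivMulti_zero]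

lemma hasDerivAt_taylorTerm_add_smul {n : ℕ} (ha : ContDiff ℝ (n + 1) a) (z v : Fin d → ℝ)
    (t : ℝ) :
    HasDerivAt (fun s : ℝ => taylorTerm a v n (z + s • v))
      ((n + 1) * taylorTerm a v (n + 1) (z + t • v)) t := by
  rw [taylorTerm, ← sum_taylorMonomial_mul_sum_add_single v n
    fun l => partialDerivMulti d l a (z + t • v)]
  refine HasDerivAt.fun_sum fun l hl => HasDerivAt.const_mul _ ?_
  have hl : ∑ i, l i = n := mem_piAntidiag_univ.1 hl
  have hdiff : Differentiable ℝ (partialDerivMulti d l a) :=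
    (contDiff_partialDerivMulti (m := 1) l (by rwa [hl, add_comm])).differentiable one_ne_zero
  simpa only [partialDerivCoord_partialDerivMulti l _ (by rwa [hl])] using
    hasDerivAt_comp_add_smul (hdiff (z + t • v))

lemma abs_taylorTerm_sub_le {n : ℕ} {B : ℝ} {y z : Fin d → ℝ} (v : Fin d → ℝ)
    (hB : ∀ l : Fin d → ℕ, ∑ i, l i = n →
      |partialDerivMulti d l a y - partialDerivMulti d l a z| ≤ B) :
    |taylorTerm a v n y - taylorTerm a v n z| ≤ (∑ i, |v i|) ^ n / n.factorial * B := by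
  rw [taylorTerm, taylorTerm, ← sum_sub_distrib, ← sum_taylorMonomial, sum_mul]
  refine (abs_sum_le_sum_abs _ _).trans (sum_le_sum fun l hl => ?_)
  rw [← mul_sub, abs_mul, ← abs_taylorMonomial]
  exact mul_le_mul_of_nonneg_left (hB l (mem_piAntidiag_univ.1 hl)) (abs_nonneg _)

theorem abs_sub_sum_taylorTerm_le {p : ℕ} {M : ℝ} {z v : Fin d → ℝ} (ha : ContDiff ℝ p a)
    (hM : ∀ l : Fin d → ℕ, ∑ i, l i = p → ∀ t ∈ Set.Icc (0 : ℝ) 1,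
      |partialDerivMulti d l a (z + t • v) - partialDerivMulti d l a z| ≤ M * t) :
    |a (z + v) - ∑ n ∈ range (p + 1), taylorTerm a v n z| ≤
      M * (∑ i, |v i|) ^ p / (p + 1).factorial := by
  have hremainder := norm_sub_sum_pow_smul_le (p := p) (b := 1)
    (c := fun n t => taylorTerm a v n (z + t • v)) (M := (∑ i, |v i|) ^ p / p.factorial * M)
    (fun n hn t _ =>
      (hasDerivAt_taylorTerm_add_smul (ha.of_le (by exact_mod_cast hn)) z v t).hasDerivWithinAt)
    (fun t ht => by
      simpa [mul_assoc] using abs_taylorTerm_sub_le v fun l hl => hM l hl t ht)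
    1 (by simp)
  convert hremainder using 1
  · simp [taylorTerm_zero]
  · rw [Nat.factorial_succ]
    push_cast
    field_simp
    simp

end TaylorExpansion

section PNorm

variable {d : ℕ} {h : ℝ≥0∞}

lemma pnorm_eq_norm_toLp (hh : h ≠ 0) (v : Fin d → ℝ) : pnorm d h v = ‖WithLp.toLp h v‖ := by
  unfold pnorm
  split_ifs with htop
  · subst htop
    simp [PiLp.norm_eq_ciSup]
  · simp [PiLp.norm_eq_sum (ENNReal.toReal_pos hh htop)]

lemma pnorm_nonneg (h : ℝ≥0∞) (v : Fin d → ℝ) : 0 ≤ pnorm d h v := by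
  unfold pnorm
  split_ifs
  · exact Real.iSup_nonneg fun i => abs_nonneg _
  · positivity

lemma pnorm_smul (hh : 1 ≤ h) (t : ℝ) (v : Fin d → ℝ) : pnorm d h (t • v) = |t| * pnorm d h v := by
  have : Fact (1 ≤ h) := ⟨hh⟩
  have hh₀ : h ≠ 0 := (zero_lt_one.trans_le hh).ne'
  rw [pnorm_eq_norm_toLp hh₀, pnorm_eq_norm_toLp hh₀, WithLp.toLp_smul, norm_smul, Real.norm_eq_abs]

lemma sum_abs_le_pnorm_mul_rpow (hh : 1 ≤ h) (v : Fin d → ℝ) :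
    ∑ i, |v i| ≤ pnorm d h v * (d : ℝ) ^ (1 - (h⁻¹).toReal) := by
  unfold pnorm
  split_ifs with htop
  · subst htop
    have hsum_le : ∑ i, |v i| ≤ ∑ _i : Fin d, ⨆ i, |v i| :=
      sum_le_sum fun i _ => le_ciSup (f := fun i => |v i|) (Set.finite_range _).bddAbove i
    simpa [mul_comm] using hsum_le
  · set q := h.toReal
    have hq : 1 ≤ q := by simpa using ENNReal.toReal_mono htop hh
    have hq₀ : 0 < q := one_pos.trans_le hq
    have hpow_le : (∑ i, |v i|) ^ q ≤ (d : ℝ) ^ (q - 1) * ∑ i, |v i| ^ q := by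
      simpa using Real.rpow_sum_le_const_mul_sum_rpow univ v hq
    calc ∑ i, |v i| = ((∑ i, |v i|) ^ q) ^ (1 / q) := by
          rw [← Real.rpow_mul (by positivity), mul_one_div_cancel hq₀.ne', Real.rpow_one]
      _ ≤ ((d : ℝ) ^ (q - 1) * ∑ i, |v i| ^ q) ^ (1 / q) := by gcongr
      _ = (∑ i, |v i| ^ q) ^ (1 / q) * (d : ℝ) ^ (1 - (h⁻¹).toReal) := by
          rw [Real.mul_rpow (by positivity) (by positivity), ← Real.rpow_mul (by positivity),
            mul_comm, ENNReal.toReal_inv]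
          congr 2
          change (q - 1) * (1 / q) = 1 - q⁻¹
          field_simp

lemma pnorm_mul_sum_abs_pow_le (hh : 1 ≤ h) (v : Fin d → ℝ) (p : ℕ) :
    pnorm d h v * (∑ i, |v i|) ^ p ≤
      pnorm d h v ^ (p + 1) * (d : ℝ) ^ ((p : ℝ) * (1 - (h⁻¹).toReal)) := by
  calc pnorm d h v * (∑ i, |v i|) ^ p
      ≤ pnorm d h v * (pnorm d h v * (d : ℝ) ^ (1 - (h⁻¹).toReal)) ^ p := by
        have := pnorm_nonneg h v
        gcongr
        exact sum_abs_le_pnorm_mul_rpow hh v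
    _ = pnorm d h v ^ (p + 1) * (d : ℝ) ^ ((p : ℝ) * (1 - (h⁻¹).toReal)) := by
        rw [mul_comm (p : ℝ), Real.rpow_mul (by positivity), Real.rpow_natCast]
        ring

end PNorm

theorem taylor_remainder_bound_hnorm_general {d p : ℕ} {C : ℝ} (hC : 0 ≤ C) {h : ℝ≥0∞}
    (hh : 1 ≤ h) {K : Set (Fin d → ℝ)} {z : Fin d → ℝ} (hK : StarConvex ℝ z K)
    {a : (Fin d → ℝ) → ℝ} (ha : ContDiff ℝ p a)
    (hlip : ∀ α : Fin d → ℕ, (∑ i, α i) = p → ∀ y ∈ K,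
      |partialDerivMulti d α a y - partialDerivMulti d α a z| ≤ C * pnorm d h (y - z)) :
    ∀ x ∈ K,
      |a x -
          ∑ l ∈ (Fintype.piFinset fun _ : Fin d => range (p + 1)).filter (fun l => ∑ i, l i ≤ p),
            (∏ i, (x i - z i) ^ l i / (Nat.factorial (l i) : ℝ)) * partialDerivMulti d l a z| ≤
        C / (Nat.factorial (p + 1) : ℝ) * pnorm d h (x - z) ^ (p + 1) *
          (d : ℝ) ^ ((p : ℝ) * (1 - (h⁻¹).toReal)) := by
  intro x hx
  have hsegment (α : Fin d → ℕ) (hα : ∑ i, α i = p) (t : ℝ) (ht : t ∈ Set.Icc (0 : ℝ) 1) :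
      |partialDerivMulti d α a (z + t • (x - z)) - partialDerivMulti d α a z| ≤
        C * pnorm d h (x - z) * t := by
    simpa [pnorm_smul hh, abs_of_nonneg ht.1, mul_assoc, mul_comm t] using
      hlip α hα _ (hK.add_smul_sub_mem hx ht.1 ht.2)
  rw [sum_filter_piFinset_range_eq_sum_piAntidiag]
  calc |a x - ∑ n ∈ range (p + 1), taylorTerm a (x - z) n z|
      ≤ C * pnorm d h (x - z) * (∑ i, |(x - z) i|) ^ p / (p + 1).factorial := by
        simpa using abs_sub_sum_taylorTerm_le ha hsegment
    _ = C / (p + 1).factorial * (pnorm d h (x - z) * (∑ i, |(x - z) i|) ^ p) := by ring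
    _ ≤ C / (p + 1).factorial *
          (pnorm d h (x - z) ^ (p + 1) * (d : ℝ) ^ ((p : ℝ) * (1 - (h⁻¹).toReal))) := by
        gcongr ?_ * ?_
        exact pnorm_mul_sum_abs_pow_le hh (x - z) p
    _ = _ := by ring

/-- Taylor remainder estimate inside Lemma 7.1: for a `(p+1,C)`-smooth function (w.r.t. `|·|_h`)
on a convex set `K` and `z` in the interior of `K`, the degree-`p` Taylor polynomial `a_p(·;z)`
satisfies `|a(x) − a_p(x;z)| ≤ (C/(p+1)!) |x−z|_h^{p+1} d^{p(1−1/h)}` for all `x ∈ K`. -/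
theorem taylor_remainder_bound_hnorm
    (d : ℕ) (hd : 0 < d) (p : ℕ) (C : ℝ) (hC : 0 < C) (h : ℝ≥0∞) (hh : 1 ≤ h)
    (K : Set (Fin d → ℝ)) (hK : Convex ℝ K) (a : (Fin d → ℝ) → ℝ)
    (hsmooth : ContDiff ℝ (p : ℕ∞) a)
    (hlip : ∀ α : Fin d → ℕ, (∑ i, α i) = p →
      ∀ x ∈ K, ∀ y ∈ K,
        |partialDerivMulti d α a x - partialDerivMulti d α a y| ≤ C * pnorm d h (x - y))
    (z : Fin d → ℝ) (hz : z ∈ interior K) :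
    ∀ x ∈ K,
      |a x -
          ∑ l ∈ (Fintype.piFinset fun _ : Fin d => Finset.range (p + 1)).filter
              (fun l => ∑ i, l i ≤ p),
            (∏ i, (x i - z i) ^ l i / (Nat.factorial (l i) : ℝ)) *
              partialDerivMulti d l a z| ≤
        C / (Nat.factorial (p + 1) : ℝ) * pnorm d h (x - z) ^ (p + 1) *
          (d : ℝ) ^ ((p : ℝ) * (1 - (h⁻¹).toReal)) := by
  have hzK : z ∈ K := interior_subset hz
  exact taylor_remainder_bound_hnorm_general hC.le hh (hK.starConvex hzK) hsmooth
    fun α hα y hy => hlip α hα y hy z hzK
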